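/- arXiv:1401.4532 — 2 statements merged into one kernel-verified Lean document; each statement's English description precedes it below -/
import Mathlib

section
/- Per-level capacity degradation: for every α > 0 and all σ_b, σ_e with 0 < σ_b ≤ σ_e, the capacity of the αℤ/2αℤ partition channel at noise level σ_b is at least its capacity at noise level σ_e, i.e., h(α,σ_b) − h(2α,σ_b) + log 2 ≥ h(α,σ_e) − h(2α,σ_e) + log 2; hence the per-level secrecy rate C(V_i) − C(W_i) of the wiretap construction is nonnegative at every level. -/
open MeasureTheory Real Filter

/-- The Gaussian density with zero mean and standard deviation `σ`. -/
noncomputable def gaussDen (σ x : ℝ) : ℝ :=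
  (Real.sqrt (2 * Real.pi * σ ^ 2))⁻¹ * Real.exp (-x ^ 2 / (2 * σ ^ 2))

/-- The `αℤ`-aliased Gaussian density `f_{σ,α}(x) = Σ_{k∈ℤ} g_σ(x − kα)`. -/
noncomputable def aliasedDen (σ α x : ℝ) : ℝ := ∑' k : ℤ, gaussDen σ (x - (k : ℝ) * α)

/-- The differential entropy `h(α,σ)` of the `αℤ`-aliased Gaussian noise
on the fundamental region `[0, α)`. -/
noncomputable def aliasedEnt (α σ : ℝ) : ℝ :=
  -∫ x in Set.Ico (0 : ℝ) α, aliasedDen σ α x * Real.log (aliasedDen σ α x)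

/-- The capacity `C(α,σ) = h(α,σ) − h(2α,σ) + log 2` of the binary partition channel
`αℤ/2αℤ` with Gaussian noise of variance `σ²`. -/
noncomputable def partCap (α σ : ℝ) : ℝ :=
  aliasedEnt α σ - aliasedEnt (2 * α) σ + Real.log 2

/-!
For Gaussian noise `N` of standard deviation `σ`, the difference `h(mα, σ) - h(α, σ)` is the
conditional entropy of `N` modulo `mα` given `N` modulo `α`, that is, the integral over `[0, α]` of
the entropy of the weights `f_{σ,mα}(x + jα)`, `0 ≤ j < m`. Noise of larger variance is the original
noise plus an independent Gaussian `S`, so its weights at `x` are the averages of the original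
weights at `x - S`. Entropy is concave, so averaging the weights can only increase it; and averaging
the resulting `α`-periodic function of `x` over translations does not change its integral over a
period. Hence the conditional entropy grows with `σ`, and the capacity, which is `log m` minus it,
decreases.
-/

open ProbabilityTheory Function Finset
open scoped NNReal

section WeightEntropy

variable {ι : Type*}

/-- The Shannon entropy of a family of weights `p` on `s`, extended to weights of arbitrary total
mass `P = ∑ i ∈ s, p i` by homogeneity: it is `P` times the entropy of the normalized weights
`p i / P`. -/
noncomputable def weightEntropy (s : Finset ι) (p : ι → ℝ) : ℝ :=
  ∑ i ∈ s, negMulLog (p i) - negMulLog (∑ i ∈ s, p i)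

lemma weightEntropy_eq_sum (s : Finset ι) (p : ι → ℝ) :
    weightEntropy s p = ∑ i ∈ s, (negMulLog (p i) + p i * log (∑ j ∈ s, p j)) := by
  rw [weightEntropy, sum_add_distrib, ← sum_mul, negMulLog, neg_mul, sub_neg_eq_add]

lemma weightEntropy_nonneg {s : Finset ι} {p : ι → ℝ} (hp : ∀ i ∈ s, 0 < p i) :
    0 ≤ weightEntropy s p := by
  rw [weightEntropy_eq_sum]
  refine sum_nonneg fun i hi ↦ ?_
  have hlog : log (p i) ≤ log (∑ j ∈ s, p j) :=
    log_le_log (hp i hi) (single_le_sum (fun j hj ↦ (hp j hj).le) hi)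
  have := mul_le_mul_of_nonneg_left hlog (hp i hi).le
  rw [negMulLog]
  linarith

lemma negMulLog_add_mul_log_le {p c : ℝ} (hp : 0 ≤ p) (hc : 0 < c) :
    negMulLog p + p * log c ≤ c - p := by
  have hscale : negMulLog p + p * log c = c * negMulLog (p / c) := by
    have := negMulLog_mul c (p / c)
    rw [mul_div_cancel₀ _ hc.ne'] at this
    rw [this, negMulLog]
    field_simp
    ring
  calc negMulLog p + p * log c = c * negMulLog (p / c) := hscale
    _ ≤ c * (1 - p / c) := by gcongr; exact negMulLog_le_one_sub_self (by positivity)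
    _ = c - p := by field_simp

-- Gibbs' inequality: the right-hand side is the tangent hyperplane at `q` to the concave,
-- homogeneous function `weightEntropy s`, hence linear in `p` with no constant term.
lemma weightEntropy_le_sum_mul_log {s : Finset ι} {p q : ι → ℝ} (hp : ∀ i ∈ s, 0 < p i)
    (hq : ∀ i ∈ s, 0 < q i) :
    weightEntropy s p ≤ ∑ i ∈ s, p i * log ((∑ j ∈ s, q j) / q i) := by
  obtain rfl | hs := s.eq_empty_or_nonempty
  · simp [weightEntropy]
  set P := ∑ j ∈ s, p j with hP
  set Q := ∑ j ∈ s, q j with hQ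
  have P_pos : 0 < P := sum_pos hp hs
  have Q_pos : 0 < Q := sum_pos hq hs
  have term_le : ∀ i ∈ s,
      negMulLog (p i) + p i * log P ≤ p i * log (Q / q i) + (q i * P / Q - p i) := by
    intro i hi
    have hqi := hq i hi
    have h := negMulLog_add_mul_log_le (hp i hi).le (show 0 < P / (Q / q i) by positivity)
    rw [log_div P_pos.ne' (by positivity), div_div_eq_mul_div, mul_comm P] at h
    linarith
  have slack_eq_zero : ∑ i ∈ s, (q i * P / Q - p i) = 0 := by
    rw [sum_sub_distrib, ← sum_div, ← sum_mul, ← hP, ← hQ, mul_div_cancel_left₀ _ Q_pos.ne',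
      sub_self]
  calc weightEntropy s p = ∑ i ∈ s, (negMulLog (p i) + p i * log P) := weightEntropy_eq_sum s p
    _ ≤ ∑ i ∈ s, (p i * log (Q / q i) + (q i * P / Q - p i)) := sum_le_sum term_le
    _ = ∑ i ∈ s, p i * log (Q / q i) := by rw [sum_add_distrib, slack_eq_zero, add_zero]

lemma weightEntropy_eq_sum_mul_log {s : Finset ι} {p : ι → ℝ} (hp : ∀ i ∈ s, 0 < p i) :
    weightEntropy s p = ∑ i ∈ s, p i * log ((∑ j ∈ s, p j) / p i) := by
  rw [weightEntropy_eq_sum]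
  refine sum_congr rfl fun i hi ↦ ?_
  rw [log_div (sum_pos hp ⟨i, hi⟩).ne' (hp i hi).ne', negMulLog]
  ring

lemma integral_weightEntropy_le {Ω : Type*} [MeasurableSpace Ω] {μ : Measure Ω} [NeZero μ]
    {s : Finset ι} {p : ι → Ω → ℝ} (hp : ∀ i ∈ s, ∀ ω, 0 < p i ω)
    (hint : ∀ i ∈ s, Integrable (p i) μ) :
    ∫ ω, weightEntropy s (p · ω) ∂μ ≤ weightEntropy s fun i ↦ ∫ ω, p i ω ∂μ := by
  set q : ι → ℝ := fun i ↦ ∫ ω, p i ω ∂μ with hq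
  have q_pos : ∀ i ∈ s, 0 < q i := fun i hi ↦ by
    have hsupp : support (p i) = Set.univ := Set.eq_univ_of_forall fun ω ↦ (hp i hi ω).ne'
    rw [hq, integral_pos_iff_support_of_nonneg (fun ω ↦ (hp i hi ω).le) (hint i hi), hsupp]
    exact NeZero.pos _
  have hint_mul := fun i hi ↦ (hint i hi).mul_const (log ((∑ j ∈ s, q j) / q i))
  calc ∫ ω, weightEntropy s (p · ω) ∂μ
      ≤ ∫ ω, ∑ i ∈ s, p i ω * log ((∑ j ∈ s, q j) / q i) ∂μ :=
        integral_mono_of_nonneg (ae_of_all _ fun ω ↦ weightEntropy_nonneg fun i hi ↦ hp i hi ω)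
          (integrable_finsetSum s hint_mul)
          (ae_of_all _ fun ω ↦ weightEntropy_le_sum_mul_log (fun i hi ↦ hp i hi ω) q_pos)
    _ = ∑ i ∈ s, q i * log ((∑ j ∈ s, q j) / q i) := by
        rw [integral_finsetSum s hint_mul]
        simp only [integral_mul_const, hq]
    _ = weightEntropy s q := (weightEntropy_eq_sum_mul_log q_pos).symm

end WeightEntropy

section Periodic

variable {E : Type*} [NormedAddCommGroup E] [NormedSpace ℝ E] {a : ℝ}

lemma periodic_sum_range_comp_add {M : Type*} [AddCommMonoid M] {f : ℝ → M} {m : ℕ}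
    (hf : Periodic f (m * a)) : Periodic (fun x ↦ ∑ j ∈ range m, f (x + j * a)) a := by
  intro x
  have shift : ∀ j : ℕ, f (x + a + j * a) = f (x + (j + 1 : ℕ) * a) := fun j ↦ by
    push_cast
    ring_nf
  obtain _ | n := m
  · simp
  · simp only [shift]
    rw [sum_range_succ, sum_range_succ' (fun j : ℕ ↦ f (x + j * a)), hf x, Nat.cast_zero, zero_mul,
      add_zero]

lemma intervalIntegral_nat_mul_eq_integral_sum_range {f : ℝ → E} (hf : Continuous f) (m : ℕ) :
    ∫ x in 0..m * a, f x = ∫ x in 0..a, ∑ j ∈ range m, f (x + j * a) := by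
  have piece : ∀ j : ℕ, ∫ x in 0..a, f (x + j * a) = ∫ x in j * a..(j + 1 : ℕ) * a, f x :=
    fun j ↦ by
      rw [intervalIntegral.integral_comp_add_right, zero_add]
      push_cast
      ring_nf
  have intervalIntegrable_translate (j : ℕ) :
      IntervalIntegrable (fun x ↦ f (x + j * a)) volume 0 a :=
    (hf.comp (continuous_add_const _)).intervalIntegrable _ _
  rw [intervalIntegral.integral_finsetSum fun j _ ↦ intervalIntegrable_translate j]
  simp only [piece]
  rw [intervalIntegral.sum_integral_adjacent_intervals (a := fun j : ℕ ↦ j * a)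
    fun j _ ↦ hf.intervalIntegrable _ _, Nat.cast_zero, zero_mul]

lemma intervalIntegral_integral_comp_sub_of_periodic [CompleteSpace E] {f : ℝ → E} (ha : a ≠ 0)
    (hf : Continuous f) (hper : Periodic f a) (ν : Measure ℝ) [IsProbabilityMeasure ν] :
    ∫ x in 0..a, ∫ s, f (x - s) ∂ν = ∫ x in 0..a, f x := by
  obtain ⟨C, hC⟩ := (hper.isBounded_of_continuous ha hf).exists_norm_le
  have : IsFiniteMeasure (volume.restrict (Set.uIoc 0 a)) :=
    isFiniteMeasure_restrict.2 (by simp [Set.uIoc])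
  have integrable_uncurry : Integrable (uncurry fun x s ↦ f (x - s))
      ((volume.restrict (Set.uIoc 0 a)).prod ν) :=
    .of_bound (hf.comp continuous_sub).aestronglyMeasurable C
      (ae_of_all _ fun _ ↦ hC _ (Set.mem_range_self _))
  have integral_translate (s : ℝ) : ∫ x in 0..a, f (x - s) = ∫ x in 0..a, f x := by
    simpa [sub_eq_neg_add] using hper.intervalIntegral_add_eq (-s) 0
  simp [intervalIntegral_integral_swap integrable_uncurry, integral_translate]

end Periodic

lemma tsum_int_eq_sum_range_tsum {E : Type*} [AddCommGroup E] [UniformSpace E]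
    [IsUniformAddGroup E] [CompleteSpace E] [T2Space E] {f : ℤ → E} (hf : Summable f) (m : ℕ)
    [NeZero m] : ∑' k, f k = ∑ j ∈ range m, ∑' n : ℤ, f (j + n * m) := by
  let e : Fin m × ℤ ≃ ℤ := (Equiv.prodComm _ _).trans (Int.divModEquiv m).symm
  have e_apply (j : Fin m) (n : ℤ) : e (j, n) = j + n * m := by
    simp [e, Int.divModEquiv, add_comm]
  have hfe : Summable fun c ↦ f (e c) := e.summable_iff.2 hf
  rw [← e.tsum_eq f, hfe.tsum_prod, tsum_fintype,
    ← Fin.sum_univ_eq_sum_range fun j : ℕ ↦ ∑' n : ℤ, f (j + n * m)]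
  simp only [e_apply]

section Gaussian

-- Bayes' rule for a Gaussian likelihood `N(s, v)` with Gaussian prior `N(μ, w)` on its mean: both
-- sides are the joint density of `(s, x)`, the right one being marginal times posterior.
lemma gaussianPDFReal_mul_gaussianPDFReal {v w : ℝ≥0} (hv : v ≠ 0) (hw : w ≠ 0) (μ s x : ℝ) :
    gaussianPDFReal s v x * gaussianPDFReal μ w s =
      gaussianPDFReal μ (v + w) x *
        gaussianPDFReal ((v * μ + w * x) / (v + w)) (v * w / (v + w)) s := by
  simp only [gaussianPDFReal, NNReal.coe_add, NNReal.coe_mul, NNReal.coe_div]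
  rw [mul_mul_mul_comm, mul_mul_mul_comm (√(2 * π * (v + w)))⁻¹, ← exp_add, ← exp_add,
    ← mul_inv, ← mul_inv, ← sqrt_mul (by positivity), ← sqrt_mul (by positivity)]
  congr 2
  · field_simp
  · field_simp
    ring

lemma integral_gaussianPDFReal_gaussianReal {v : ℝ≥0} (hv : v ≠ 0) (w : ℝ≥0) (μ x : ℝ) :
    ∫ s, gaussianPDFReal s v x ∂gaussianReal μ w = gaussianPDFReal μ (v + w) x := by
  obtain rfl | hw := eq_or_ne w 0
  · simp
  have hvar : v * w / (v + w) ≠ 0 := by positivity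
  simp only [integral_gaussianReal_eq_integral_smul hw, smul_eq_mul,
    mul_comm (gaussianPDFReal μ w _), gaussianPDFReal_mul_gaussianPDFReal hv hw, integral_const_mul,
    integral_gaussianPDFReal_eq_one _ hvar, mul_one]

end Gaussian

section GaussDen

variable {σ : ℝ}

lemma gaussDen_sub_eq_gaussianPDFReal (σ x s : ℝ) :
    gaussDen σ (x - s) = gaussianPDFReal s (σ ^ 2).toNNReal x := by
  rw [gaussDen, gaussianPDFReal, coe_toNNReal _ (sq_nonneg σ)]

lemma gaussDen_pos (hσ : σ ≠ 0) (x : ℝ) : 0 < gaussDen σ x := by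
  unfold gaussDen
  positivity

lemma continuous_gaussDen (σ : ℝ) : Continuous (gaussDen σ) := by
  unfold gaussDen
  fun_prop

lemma integral_gaussDen_comp_sub (hσ : σ ≠ 0) (v : ℝ≥0) (x : ℝ) :
    ∫ s, gaussDen σ (x - s) ∂gaussianReal 0 v = gaussDen √(σ ^ 2 + v) x := by
  have hvar : (σ ^ 2).toNNReal ≠ 0 := (toNNReal_pos.2 (by positivity)).ne'
  have hsum : (√(σ ^ 2 + v) ^ 2).toNNReal = (σ ^ 2).toNNReal + v := by
    rw [sq_sqrt (by positivity), toNNReal_add (by positivity) v.coe_nonneg, toNNReal_coe]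
  simp only [gaussDen_sub_eq_gaussianPDFReal, integral_gaussianPDFReal_gaussianReal hvar]
  rw [← sub_zero x, gaussDen_sub_eq_gaussianPDFReal, hsum, sub_zero]

end GaussDen

section AliasedDen

variable {σ α : ℝ}

lemma ofReal_gaussDen_sub_int_mul_eq_mul_jacobiTheta₂_term (hσ : σ ≠ 0) (α x : ℝ) (k : ℤ) :
    (gaussDen σ (x - k * α) : ℂ) = gaussDen σ x *
      jacobiTheta₂_term k (-(x * α / (2 * π * σ ^ 2) : ℝ) * Complex.I)
        ((α ^ 2 / (2 * π * σ ^ 2) : ℝ) * Complex.I) := by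
  have hσ' : (σ : ℂ) ≠ 0 := mod_cast hσ
  simp only [gaussDen, jacobiTheta₂_term, Complex.ofReal_mul, Complex.ofReal_exp]
  rw [mul_assoc (Complex.ofReal _), ← Complex.exp_add]
  congr 2
  push_cast
  field_simp
  ring_nf
  simp only [Complex.I_sq]
  ring

lemma im_theta_parameter_pos (hσ : σ ≠ 0) (hα : α ≠ 0) :
    0 < ((α ^ 2 / (2 * π * σ ^ 2) : ℝ) * Complex.I).im := by
  rw [Complex.im_ofReal_mul, Complex.I_im, mul_one]
  positivity

lemma hasSum_gaussDen_sub_int_mul (hσ : σ ≠ 0) (hα : α ≠ 0) (x : ℝ) :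
    HasSum (fun k : ℤ ↦ gaussDen σ (x - k * α)) (gaussDen σ x *
      (jacobiTheta₂ (-(x * α / (2 * π * σ ^ 2) : ℝ) * Complex.I)
        ((α ^ 2 / (2 * π * σ ^ 2) : ℝ) * Complex.I)).re) := by
  have h := (hasSum_jacobiTheta₂_term (-(x * α / (2 * π * σ ^ 2) : ℝ) * Complex.I)
    (im_theta_parameter_pos hσ hα)).mul_left (gaussDen σ x : ℂ)
  simp only [← ofReal_gaussDen_sub_int_mul_eq_mul_jacobiTheta₂_term hσ] at h
  simpa using Complex.hasSum_re h

lemma continuous_aliasedDen (hσ : σ ≠ 0) (hα : α ≠ 0) : Continuous (aliasedDen σ α) := by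
  have continuous_theta : Continuous fun x : ℝ ↦
      jacobiTheta₂ (-(x * α / (2 * π * σ ^ 2) : ℝ) * Complex.I)
        ((α ^ 2 / (2 * π * σ ^ 2) : ℝ) * Complex.I) :=
    Continuous.comp (g := (jacobiTheta₂ · _))
      (continuous_iff_continuousAt.2 fun z ↦
        (differentiableAt_jacobiTheta₂_fst z (im_theta_parameter_pos hσ hα)).continuousAt)
      (by fun_prop)
  exact ((continuous_gaussDen σ).mul (Complex.continuous_re.comp continuous_theta)).congr
    fun x ↦ (hasSum_gaussDen_sub_int_mul hσ hα x).tsum_eq.symm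

lemma aliasedDen_pos (hσ : σ ≠ 0) (hα : α ≠ 0) (x : ℝ) : 0 < aliasedDen σ α x :=
  (hasSum_gaussDen_sub_int_mul hσ hα x).summable.tsum_pos (fun _ ↦ (gaussDen_pos hσ _).le) 0
    (gaussDen_pos hσ _)

lemma aliasedDen_eq_tsum_add (σ α x : ℝ) :
    aliasedDen σ α x = ∑' k : ℤ, gaussDen σ (x + k * α) := by
  rw [aliasedDen, ← (Equiv.neg ℤ).tsum_eq]
  simp

lemma aliasedDen_periodic (σ α : ℝ) : Periodic (aliasedDen σ α) α := by
  intro x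
  rw [aliasedDen, aliasedDen, ← (Equiv.addRight (1 : ℤ)).tsum_eq]
  simp [add_mul]

lemma aliasedDen_eq_sum_range (hσ : σ ≠ 0) (hα : α ≠ 0) (m : ℕ) [NeZero m] (x : ℝ) :
    aliasedDen σ α x = ∑ j ∈ range m, aliasedDen σ (m * α) (x + j * α) := by
  have hsum : Summable fun k : ℤ ↦ gaussDen σ (x + k * α) := by
    simpa [comp_def] using
      (Equiv.neg ℤ).summable_iff.2 (hasSum_gaussDen_sub_int_mul hσ hα x).summable
  simp only [aliasedDen_eq_tsum_add, tsum_int_eq_sum_range_tsum hsum m]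
  push_cast
  simp only [add_mul, add_assoc, mul_assoc]

lemma integral_aliasedDen_comp_sub (hσ : σ ≠ 0) (hα : α ≠ 0) (v : ℝ≥0) (x : ℝ) :
    ∫ s, aliasedDen σ α (x - s) ∂gaussianReal 0 v = aliasedDen √(σ ^ 2 + v) α x := by
  have hσv : √(σ ^ 2 + v) ≠ 0 := by positivity
  have integral_term (k : ℤ) : ∫ s, gaussDen σ (x - s - k * α) ∂gaussianReal 0 v =
      gaussDen √(σ ^ 2 + v) (x - k * α) := by
    simp only [sub_right_comm x _ (k * α), integral_gaussDen_comp_sub hσ]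
  have integrable_term (k : ℤ) : Integrable (fun s ↦ gaussDen σ (x - s - k * α))
      (gaussianReal 0 v) :=
    .of_integral_ne_zero (by rw [integral_term]; exact (gaussDen_pos hσv _).ne')
  have summable_norm : Summable fun k : ℤ ↦
      ∫ s, ‖gaussDen σ (x - s - k * α)‖ ∂gaussianReal 0 v := by
    simp only [norm_of_nonneg (gaussDen_pos hσ _).le, integral_term]
    exact (hasSum_gaussDen_sub_int_mul hσv hα x).summable
  simp only [aliasedDen, ← integral_tsum_of_summable_integral_norm integrable_term summable_norm,
    integral_term]

lemma integrable_aliasedDen_comp_sub (hσ : σ ≠ 0) (hα : α ≠ 0) (v : ℝ≥0) (x : ℝ) :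
    Integrable (fun s ↦ aliasedDen σ α (x - s)) (gaussianReal 0 v) := by
  refine .of_integral_ne_zero ?_
  rw [integral_aliasedDen_comp_sub hσ hα]
  exact (aliasedDen_pos (by positivity) hα x).ne'

lemma aliasedEnt_eq_intervalIntegral (hα : 0 ≤ α) (σ : ℝ) :
    aliasedEnt α σ = ∫ x in 0..α, negMulLog (aliasedDen σ α x) := by
  rw [aliasedEnt, intervalIntegral.integral_of_le hα, integral_Ico_eq_integral_Ioc, ← integral_neg]
  simp only [negMulLog, neg_mul]

end AliasedDen

section CosetEntropy

variable {m : ℕ} [NeZero m] {σ α : ℝ}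

/-- The entropy of the coset of `mαℤ` in `αℤ` left undetermined when Gaussian noise `N` is observed
modulo `α` at the point `x`: the conditional law of `N` modulo `mα` puts weights proportional to
`f_{σ,mα}(x + jα)`, `0 ≤ j < m`, on the `m` possible cosets. The weights are not normalized, so the
value includes the factor `f_{σ,α}(x)`, the density of the observation. -/
noncomputable def cosetEntropy (m : ℕ) (σ α x : ℝ) : ℝ :=
  weightEntropy (range m) fun j ↦ aliasedDen σ (m * α) (x + j * α)

lemma cosetEntropy_eq_sum_sub (hσ : σ ≠ 0) (hα : α ≠ 0) (x : ℝ) :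
    cosetEntropy m σ α x = ∑ j ∈ range m, negMulLog (aliasedDen σ (m * α) (x + j * α)) -
      negMulLog (aliasedDen σ α x) := by
  rw [cosetEntropy, weightEntropy, ← aliasedDen_eq_sum_range hσ hα m]

lemma cosetEntropy_nonneg (hσ : σ ≠ 0) (hα : α ≠ 0) (x : ℝ) : 0 ≤ cosetEntropy m σ α x :=
  weightEntropy_nonneg fun _ _ ↦ aliasedDen_pos hσ (mul_ne_zero (NeZero.ne _) hα) _

lemma continuous_cosetEntropy (hσ : σ ≠ 0) (hα : α ≠ 0) : Continuous (cosetEntropy m σ α) := by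
  have := continuous_aliasedDen hσ (mul_ne_zero (NeZero.ne (m : ℝ)) hα)
  unfold cosetEntropy weightEntropy
  fun_prop

lemma cosetEntropy_periodic (m : ℕ) (σ α : ℝ) : Periodic (cosetEntropy m σ α) α :=
  have hper := aliasedDen_periodic σ (m * α)
  (periodic_sum_range_comp_add (hper.comp negMulLog)).sub
    ((periodic_sum_range_comp_add hper).comp negMulLog)

lemma aliasedEnt_nat_mul_sub_aliasedEnt (hσ : σ ≠ 0) (hα : 0 < α) :
    aliasedEnt (m * α) σ - aliasedEnt α σ = ∫ x in 0..α, cosetEntropy m σ α x := by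
  have continuous_coarse : Continuous fun x ↦ negMulLog (aliasedDen σ (m * α) x) :=
    continuous_negMulLog.comp (continuous_aliasedDen hσ (mul_ne_zero (NeZero.ne _) hα.ne'))
  have continuous_fine : Continuous fun x ↦ negMulLog (aliasedDen σ α x) :=
    continuous_negMulLog.comp (continuous_aliasedDen hσ hα.ne')
  have continuous_sum : Continuous fun x ↦
      ∑ j ∈ range m, negMulLog (aliasedDen σ (m * α) (x + j * α)) :=
    continuous_finsetSum _ fun j _ ↦ continuous_coarse.comp (continuous_add_const _)
  rw [aliasedEnt_eq_intervalIntegral hα.le, aliasedEnt_eq_intervalIntegral (by positivity),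
    intervalIntegral_nat_mul_eq_integral_sum_range continuous_coarse,
    ← intervalIntegral.integral_sub (continuous_sum.intervalIntegrable _ _)
      (continuous_fine.intervalIntegrable _ _)]
  simp only [cosetEntropy_eq_sum_sub hσ hα.ne']

lemma integral_cosetEntropy_comp_sub_le (hσ : σ ≠ 0) (hα : α ≠ 0) (v : ℝ≥0) (x : ℝ) :
    ∫ s, cosetEntropy m σ α (x - s) ∂gaussianReal 0 v ≤ cosetEntropy m √(σ ^ 2 + v) α x := by
  have hmα : m * α ≠ 0 := mul_ne_zero (NeZero.ne _) hα
  simp only [cosetEntropy, ← integral_aliasedDen_comp_sub hσ hmα, sub_add_eq_add_sub]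
  exact integral_weightEntropy_le (fun _ _ _ ↦ aliasedDen_pos hσ hmα _)
    fun _ _ ↦ integrable_aliasedDen_comp_sub hσ hmα v _

lemma intervalIntegral_cosetEntropy_le (hσ : σ ≠ 0) (hα : 0 < α) (v : ℝ≥0) :
    ∫ x in 0..α, cosetEntropy m σ α x ≤ ∫ x in 0..α, cosetEntropy m √(σ ^ 2 + v) α x := by
  rw [← intervalIntegral_integral_comp_sub_of_periodic hα.ne'
      (continuous_cosetEntropy hσ hα.ne') (cosetEntropy_periodic m σ α) (gaussianReal 0 v),
    intervalIntegral.integral_of_le hα.le, intervalIntegral.integral_of_le hα.le]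
  refine integral_mono_of_nonneg
    (ae_of_all _ fun x ↦ integral_nonneg fun s ↦ cosetEntropy_nonneg hσ hα.ne' _) ?_
    (ae_of_all _ fun x ↦ integral_cosetEntropy_comp_sub_le hσ hα.ne' v x)
  exact ((continuous_cosetEntropy (by positivity) hα.ne').intervalIntegrable 0 α).1

end CosetEntropy

theorem partition_capacity_degradation_general (m : ℕ) [NeZero m] (α σb σe : ℝ) (hα : 0 < α)
    (hσb : 0 < σb) (hbe : σb ≤ σe) :
    aliasedEnt α σb - aliasedEnt (m * α) σb + Real.log m ≥
      aliasedEnt α σe - aliasedEnt (m * α) σe + Real.log m := by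
  have hσe : σe = √(σb ^ 2 + (σe ^ 2 - σb ^ 2).toNNReal) := by
    rw [coe_toNNReal _ (sub_nonneg.2 (by gcongr)), add_sub_cancel, sqrt_sq (hσb.le.trans hbe)]
  have equivocation_le := intervalIntegral_cosetEntropy_le (m := m) hσb.ne' hα
    (σe ^ 2 - σb ^ 2).toNNReal
  rw [← hσe, ← aliasedEnt_nat_mul_sub_aliasedEnt hσb.ne' hα,
    ← aliasedEnt_nat_mul_sub_aliasedEnt (hσb.trans_le hbe).ne' hα] at equivocation_le
  linarith

/-- per-level capacity degradation: the capacity of the `αℤ/2αℤ` partition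
channel at noise level `σ_b` is at least its capacity at noise level `σ_e ≥ σ_b`; hence
the per-level secrecy rate `C(V_i) − C(W_i)` is nonnegative. -/
theorem partition_capacity_degradation (α σb σe : ℝ) (hα : 0 < α) (hσb : 0 < σb)
    (hbe : σb ≤ σe) :
    aliasedEnt α σb - aliasedEnt (2 * α) σb + Real.log 2 ≥
      aliasedEnt α σe - aliasedEnt (2 * α) σe + Real.log 2 := by
  exact_mod_cast partition_capacity_degradation_general 2 α σb σe hα hσb hbe
end

section
/- Upper bound on the total secrecy rate (converse part of the rate computation in Theorem 1): for all σ_b, σ_e with 0 < σ_b ≤ σ_e, every α > 0 and every integer r ≥ 2, the sum over the levels of the binary partition chain αℤ/2αℤ/⋯/2^{r−1}αℤ of the per-level capacity differences satisfies Σ_{i=1}^{r−1} ( C(2^{i−1}α, σ_b) − C(2^{i−1}α, σ_e) ) ≤ (1/2)·log( σ_e² / σ_b² ). -/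
open MeasureTheory Real Filter

/-!
The sum telescopes to `[h(α, σ_b) - h(α, σ_e)] + [h(α', σ_e) - h(α', σ_b)]` with `α' = 2^(r-1) α`.
Let `X` and `Y` be independent centred Gaussians with `X` of variance `σ_b²` and `X + Y` of
variance `σ_e²`, write `g_b, g_e` for the densities of `X` and `X + Y` and `f_b, f_e` for their
periodizations. Unfolding the entropy integral gives `h(α, σ_b) = -E log f_b(X)`, and likewise for
`σ_e`. The theorem follows from two inequalities of data-processing type:

* `E log f_e(X + Y) ≤ E log f_b(X)`: the first bracket is nonpositive;
* `E log (g_e / f_e)(X + Y) ≤ E log (g_b / f_b)(X)`: the second bracket is at most the difference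
  of the unaliased Gaussian entropies.

By Jensen, an inequality `E v(X + Y) ≤ E u(X)` holds as soon as `E exp (v(X + y) - u(X)) ≤ 1` for
every `y`. In both cases this expectation is, up to a translation, of the form
`∫ p / (P p) * P q`, where `P` is periodization. It is at most `∫ q`, because `P` is symmetric for
the pairing `∫ p * q` and `P (p / P p) ≤ 1`.
-/

open ProbabilityTheory
open scoped ENNReal NNReal

section Periodization

/-- The `α`-periodization `x ↦ ∑ k : ℤ, q (x - k α)` of a function `q` on the line. With values in
`ℝ` it takes a density to its `αℤ`-aliased density; with values in `ℝ≥0∞` the sum always makes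
sense, which frees the integral identities from summability conditions. -/
noncomputable def periodization {M : Type*} [AddCommMonoid M] [TopologicalSpace M] (α : ℝ)
    (q : ℝ → M) (x : ℝ) : M :=
  ∑' k : ℤ, q (x - k * α)

lemma periodic_periodization {M : Type*} [AddCommMonoid M] [TopologicalSpace M] (α : ℝ)
    (q : ℝ → M) : Function.Periodic (periodization α q) α := fun x => by
  unfold periodization
  rw [← (Equiv.addRight (1 : ℤ)).tsum_eq]
  refine tsum_congr fun k => congrArg q ?_
  simp only [Equiv.coe_addRight, Int.cast_add, Int.cast_one]
  ring

lemma periodization_comp_add_right {M : Type*} [AddCommMonoid M] [TopologicalSpace M] (α : ℝ)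
    (q : ℝ → M) (x y : ℝ) :
    periodization α (fun z => q (z + y)) x = periodization α q (x + y) := by
  simp only [periodization, sub_add_eq_add_sub]

lemma integral_eq_setIntegral_periodization {E : Type*} [NormedAddCommGroup E] [NormedSpace ℝ E]
    {α : ℝ} (hα : 0 < α) {q : ℝ → E} (hq : Integrable q) (t : ℝ) :
    ∫ x, q x = ∫ x in Set.Ioc t (t + α), periodization α q x := by
  have hdom := isAddFundamentalDomain_Ioc hα t
  let zmultiplesEquiv : ℤ ≃ AddSubgroup.zmultiples α :=
    Equiv.ofInjective (fun n : ℤ => n • α) (zsmul_left_strictMono hα).injective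
  have vadd_eq (k : ℤ) (x : ℝ) : -zmultiplesEquiv k +ᵥ x = x - k * α := by
    change -(k • α) + x = _
    rw [zsmul_eq_mul]
    ring
  unfold periodization
  rw [integral_tsum fun k : ℤ => (hq.comp_sub_right _).aestronglyMeasurable.restrict,
    hdom.integral_eq_tsum' q hq, ← zmultiplesEquiv.tsum_eq]
  · simp only [vadd_eq]
  · have lintegral_eq := hdom.lintegral_eq_tsum' fun x => ‖q x‖ₑ
    rw [← zmultiplesEquiv.tsum_eq] at lintegral_eq
    simp only [vadd_eq] at lintegral_eq
    exact lintegral_eq ▸ hq.2.ne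

variable {p q : ℝ → ℝ≥0∞}

lemma measurable_periodization (α : ℝ) (hq : Measurable q) : Measurable (periodization α q) :=
  Measurable.tsum fun k : ℤ => hq.comp (measurable_id.sub_const (k * α))

lemma lintegral_periodization_mul (α : ℝ) (hp : Measurable p) (hq : Measurable q) :
    ∫⁻ x, periodization α p x * q x = ∫⁻ x, p x * periodization α q x := by
  have shift (k : ℤ) : ∫⁻ x, p (x - k * α) * q x = ∫⁻ x, p x * q (x - (-k : ℤ) * α) := by
    rw [← lintegral_add_right_eq_self _ ((k : ℝ) * α)]
    simp
  simp only [periodization, ← ENNReal.tsum_mul_left, ← ENNReal.tsum_mul_right]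
  rw [lintegral_tsum fun k => by fun_prop, lintegral_tsum fun k => by fun_prop,
    ← (Equiv.neg ℤ).tsum_eq fun k : ℤ => ∫⁻ x, p x * q (x - k * α)]
  exact tsum_congr shift

lemma periodization_div_periodization_le_one (α : ℝ) (p : ℝ → ℝ≥0∞) (x : ℝ) :
    periodization α (fun z => p z / periodization α p z) x ≤ 1 :=
  calc periodization α (fun z => p z / periodization α p z) x
      = periodization α p x / periodization α p x := by
        change ∑' k : ℤ, p (x - k * α) / periodization α p (x - k * α) = _
        simp only [(periodic_periodization α p).sub_int_mul_eq, div_eq_mul_inv]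
        exact ENNReal.tsum_mul_right
    _ ≤ 1 := ENNReal.div_self_le_one

lemma lintegral_div_periodization_mul_periodization_le (α : ℝ) (hp : Measurable p)
    (hq : Measurable q) :
    ∫⁻ x, p x / periodization α p x * periodization α q x ≤ ∫⁻ x, q x := by
  calc ∫⁻ x, p x / periodization α p x * periodization α q x
      = ∫⁻ x, periodization α (fun z => p z / periodization α p z) x * q x :=
        (lintegral_periodization_mul α (hp.div (measurable_periodization α hp)) hq).symm
    _ ≤ ∫⁻ x, q x := lintegral_mono fun x =>
        mul_le_of_le_one_left' (periodization_div_periodization_le_one α p x)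

end Periodization

section Gibbs

lemma integral_le_integral_of_lintegral_exp_sub_le_one {Ω : Type*} [MeasurableSpace Ω]
    {P : Measure Ω} [IsProbabilityMeasure P] {u v : Ω → ℝ} (hu : Integrable u P)
    (hv : Integrable v P) (hexp : ∫⁻ ω, ENNReal.ofReal (rexp (v ω - u ω)) ∂P ≤ 1) :
    ∫ ω, v ω ∂P ≤ ∫ ω, u ω ∂P := by
  have hmeas : AEStronglyMeasurable (fun ω => rexp (v ω - u ω)) P :=
    continuous_exp.comp_aestronglyMeasurable (hv.sub hu).1
  have hnonneg : 0 ≤ᵐ[P] fun ω => rexp (v ω - u ω) := ae_of_all _ fun _ => (exp_pos _).le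
  have hint : Integrable (fun ω => rexp (v ω - u ω)) P :=
    ⟨hmeas, (hasFiniteIntegral_iff_ofReal hnonneg).2 (hexp.trans_lt ENNReal.one_lt_top)⟩
  have hle : ∫ ω, rexp (v ω - u ω) ∂P ≤ 1 := by
    rw [integral_eq_lintegral_of_nonneg_ae hnonneg hmeas]
    exact ENNReal.toReal_le_of_le_ofReal zero_le_one (by simpa using hexp)
  have jensen : rexp (∫ ω, (v ω - u ω) ∂P) ≤ ∫ ω, rexp (v ω - u ω) ∂P :=
    convexOn_exp.map_integral_le continuous_exp.continuousOn isClosed_univ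
      (ae_of_all _ fun _ => Set.mem_univ _) (hv.sub hu) hint
  rw [← sub_nonpos, ← integral_sub hv hu, ← exp_le_one_iff]
  exact jensen.trans hle

lemma integral_conv_le_integral_of_lintegral_exp_sub_le_one {G : Type*} [AddCommMonoid G]
    [MeasurableSpace G] [MeasurableAdd₂ G] {μ ν : Measure G} [IsProbabilityMeasure μ]
    [IsProbabilityMeasure ν] {u v : G → ℝ} (hu : Integrable u μ) (hv : Integrable v (μ ∗ ν))
    (hexp : ∀ y, ∫⁻ x, ENNReal.ofReal (rexp (v (x + y) - u x)) ∂μ ≤ 1) :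
    ∫ z, v z ∂(μ ∗ ν) ≤ ∫ x, u x ∂μ := by
  rw [Measure.conv_comm] at hv ⊢
  have hv_add : ∀ᵐ y ∂ν, Integrable (fun x => v (y + x)) μ := ((integrable_conv_iff hv.1).1 hv).1
  have hv_prod : Integrable (fun z : G × G => v (z.1 + z.2)) (ν.prod μ) :=
    hv.comp_measurable measurable_add
  calc ∫ z, v z ∂(ν ∗ μ) = ∫ y, ∫ x, v (y + x) ∂μ ∂ν := integral_conv hv
    _ ≤ ∫ _, ∫ x, u x ∂μ ∂ν := by
        refine integral_mono_ae hv_prod.integral_prod_left (integrable_const _) ?_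
        filter_upwards [hv_add] with y hy
        refine integral_le_integral_of_lintegral_exp_sub_le_one hu hy ?_
        simpa only [add_comm y] using hexp y
    _ = ∫ x, u x ∂μ := by simp

end Gibbs

/-- `μ` has the everywhere positive density `p` with respect to Lebesgue measure, and the series
defining the `α`-periodization of `p` converges at every point. -/
structure HasPeriodizableDensity (μ : Measure ℝ) (α : ℝ) (p : ℝ → ℝ) : Prop where
  measurable : Measurable p
  pos : ∀ x, 0 < p x
  summable : ∀ x, Summable fun k : ℤ => p (x - k * α)
  eq_withDensity : μ = volume.withDensity fun x => ENNReal.ofReal (p x)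

namespace HasPeriodizableDensity

variable {μ ν : Measure ℝ} {α : ℝ} {p q f : ℝ → ℝ}

lemma le_periodization (hp : HasPeriodizableDensity μ α p) (x : ℝ) :
    p x ≤ periodization α p x := by
  simpa [periodization] using (hp.summable x).le_tsum 0 fun k _ => (hp.pos _).le

lemma periodization_pos (hp : HasPeriodizableDensity μ α p) (x : ℝ) : 0 < periodization α p x :=
  (hp.pos x).trans_le (hp.le_periodization x)

lemma ofReal_periodization (hp : HasPeriodizableDensity μ α p) (x : ℝ) :
    ENNReal.ofReal (periodization α p x) = periodization α (fun z => ENNReal.ofReal (p z)) x :=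
  ENNReal.ofReal_tsum_of_nonneg (fun _ => (hp.pos _).le) (hp.summable x)

lemma measurable_periodization (hp : HasPeriodizableDensity μ α p) :
    Measurable (periodization α p) := by
  have toReal_eq : periodization α p =
      fun x => (periodization α (fun z => ENNReal.ofReal (p z)) x).toReal := funext fun x => by
    rw [← hp.ofReal_periodization, ENNReal.toReal_ofReal (hp.periodization_pos x).le]
  rw [toReal_eq]
  exact (_root_.measurable_periodization α hp.measurable.ennreal_ofReal).ennreal_toReal

lemma lintegral_eq (hp : HasPeriodizableDensity μ α p) (φ : ℝ → ℝ≥0∞) :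
    ∫⁻ x, φ x ∂μ = ∫⁻ x, ENNReal.ofReal (p x) * φ x := by
  rw [hp.eq_withDensity, lintegral_withDensity_eq_lintegral_mul_non_measurable _
    hp.measurable.ennreal_ofReal (ae_of_all _ fun _ => ENNReal.ofReal_lt_top)]
  rfl

lemma lintegral_ofReal_eq_one (hp : HasPeriodizableDensity μ α p) [IsProbabilityMeasure μ] :
    ∫⁻ x, ENNReal.ofReal (p x) = 1 := by
  simpa using (hp.lintegral_eq 1).symm

lemma integral_eq (hp : HasPeriodizableDensity μ α p) (f : ℝ → ℝ) :
    ∫ x, f x ∂μ = ∫ x, p x * f x := by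
  rw [hp.eq_withDensity, integral_withDensity_eq_integral_toReal_smul
    hp.measurable.ennreal_ofReal (ae_of_all _ fun _ => ENNReal.ofReal_lt_top)]
  simp [ENNReal.toReal_ofReal (hp.pos _).le]

lemma integrable_iff (hp : HasPeriodizableDensity μ α p) :
    Integrable f μ ↔ Integrable fun x => p x * f x := by
  rw [hp.eq_withDensity, integrable_withDensity_iff_integrable_smul'
    hp.measurable.ennreal_ofReal (ae_of_all _ fun _ => ENNReal.ofReal_lt_top)]
  simp [ENNReal.toReal_ofReal (hp.pos _).le]

lemma integral_of_periodic (hp : HasPeriodizableDensity μ α p) (hα : 0 < α)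
    (hf : Function.Periodic f α) (hint : Integrable f μ) (t : ℝ) :
    ∫ x, f x ∂μ = ∫ x in Set.Ioc t (t + α), periodization α p x * f x := by
  rw [hp.integral_eq, integral_eq_setIntegral_periodization hα (hp.integrable_iff.1 hint) t]
  simp only [periodization, hf.sub_int_mul_eq, tsum_mul_right]

lemma lintegral_ofReal_div_periodization_mul_le_one (hp : HasPeriodizableDensity μ α p)
    (hq : HasPeriodizableDensity ν α q) [IsProbabilityMeasure ν] (y : ℝ) :
    ∫⁻ x, ENNReal.ofReal (p x / periodization α p x * periodization α q (x + y)) ≤ 1 := by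
  have ofReal_eq (x : ℝ) :
      ENNReal.ofReal (p x / periodization α p x * periodization α q (x + y)) =
        ENNReal.ofReal (p x) / periodization α (fun z => ENNReal.ofReal (p z)) x *
          periodization α (fun z => ENNReal.ofReal (q (z + y))) x := by
    rw [ENNReal.ofReal_mul (div_pos (hp.pos x) (hp.periodization_pos x)).le,
      ENNReal.ofReal_div_of_pos (hp.periodization_pos x), hp.ofReal_periodization,
      hq.ofReal_periodization,
      periodization_comp_add_right α (fun z => ENNReal.ofReal (q z)) x y]
  calc ∫⁻ x, ENNReal.ofReal (p x / periodization α p x * periodization α q (x + y))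
      ≤ ∫⁻ x, ENNReal.ofReal (q (x + y)) := by
        simp only [ofReal_eq]
        exact lintegral_div_periodization_mul_periodization_le α hp.measurable.ennreal_ofReal
          (hq.measurable.comp (measurable_id.add_const y)).ennreal_ofReal
    _ = ∫⁻ x, ENNReal.ofReal (q x) :=
        lintegral_add_right_eq_self (fun x => ENNReal.ofReal (q x)) y
    _ = 1 := hq.lintegral_ofReal_eq_one

lemma integral_log_periodization_conv_le (hp : HasPeriodizableDensity μ α p)
    (hq : HasPeriodizableDensity (μ ∗ ν) α q) [IsProbabilityMeasure μ] [IsProbabilityMeasure ν]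
    (hp_int : Integrable (fun x => log (periodization α p x)) μ)
    (hq_int : Integrable (fun x => log (periodization α q x)) (μ ∗ ν)) :
    ∫ x, log (periodization α q x) ∂(μ ∗ ν) ≤ ∫ x, log (periodization α p x) ∂μ := by
  refine integral_conv_le_integral_of_lintegral_exp_sub_le_one hp_int hq_int fun y => ?_
  refine le_of_eq_of_le ?_ (hp.lintegral_ofReal_div_periodization_mul_le_one hq y)
  rw [hp.lintegral_eq]
  refine lintegral_congr fun x => ?_
  rw [← ENNReal.ofReal_mul (hp.pos x).le, exp_sub, exp_log (hq.periodization_pos _),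
    exp_log (hp.periodization_pos x), mul_div_assoc', div_mul_eq_mul_div]

lemma integral_log_div_periodization_conv_le (hp : HasPeriodizableDensity μ α p)
    (hq : HasPeriodizableDensity (μ ∗ ν) α q) [IsProbabilityMeasure μ] [IsProbabilityMeasure ν]
    (hp_int : Integrable (fun x => log (p x / periodization α p x)) μ)
    (hq_int : Integrable (fun x => log (q x / periodization α q x)) (μ ∗ ν)) :
    ∫ x, log (q x / periodization α q x) ∂(μ ∗ ν) ≤
      ∫ x, log (p x / periodization α p x) ∂μ := by
  refine integral_conv_le_integral_of_lintegral_exp_sub_le_one hp_int hq_int fun y => ?_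
  refine le_of_eq_of_le ?_ (hq.lintegral_ofReal_div_periodization_mul_le_one hp (-y))
  rw [hp.lintegral_eq, ← lintegral_add_right_eq_self (fun x => ENNReal.ofReal (q x / _ * _)) y]
  refine lintegral_congr fun x => ?_
  have hpx := hp.pos x
  have hPx := hp.periodization_pos x
  rw [← ENNReal.ofReal_mul hpx.le, exp_sub,
    exp_log (div_pos (hq.pos _) (hq.periodization_pos _)), exp_log (div_pos hpx hPx),
    add_neg_cancel_right]
  congr 1
  field_simp

end HasPeriodizableDensity

section Gaussian

lemma summable_exp_neg_mul_int_sq {c : ℝ} (hc : 0 < c) :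
    Summable fun k : ℤ => rexp (-(c * (k : ℝ) ^ 2)) := by
  refine (summable_pow_mul_jacobiTheta₂_term_bound 0 (div_pos hc pi_pos) 0).congr fun k => ?_
  rw [pow_zero, one_mul]
  congr 1
  field_simp
  ring

variable {α : ℝ} {v w : ℝ≥0}

lemma gaussianPDFReal_sub_le (m : ℝ) (v : ℝ≥0) (x t : ℝ) :
    gaussianPDFReal m v (x - t) ≤
      (√(2 * π * v))⁻¹ * rexp ((x - m) ^ 2 / (2 * v)) * rexp (-(t ^ 2 / (4 * v))) := by
  have exponent_gap : (x - m) ^ 2 / (2 * v) + -(t ^ 2 / (4 * v)) - -(x - t - m) ^ 2 / (2 * v) =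
      (2 * (x - m) - t) ^ 2 / (4 * v) := by
    field_simp
    ring
  rw [gaussianPDFReal, mul_assoc _ (rexp _), ← exp_add]
  gcongr
  rw [← sub_nonneg, exponent_gap]
  positivity

lemma gaussianPDFReal_sub_int_mul_le (m : ℝ) (v : ℝ≥0) (α x : ℝ) (k : ℤ) :
    gaussianPDFReal m v (x - k * α) ≤ (√(2 * π * v))⁻¹ * rexp ((x - m) ^ 2 / (2 * v)) *
      rexp (-(α ^ 2 / (4 * v) * (k : ℝ) ^ 2)) := by
  convert gaussianPDFReal_sub_le m v x (k * α) using 3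
  ring

lemma hasPeriodizableDensity_gaussianReal (m : ℝ) (hv : v ≠ 0) (hα : α ≠ 0) :
    HasPeriodizableDensity (gaussianReal m v) α (gaussianPDFReal m v) where
  measurable := measurable_gaussianPDFReal m v
  pos x := gaussianPDFReal_pos m v x hv
  summable x := ((summable_exp_neg_mul_int_sq (by positivity)).mul_left _).of_nonneg_of_le
    (fun _ => gaussianPDFReal_nonneg m v _) (gaussianPDFReal_sub_int_mul_le m v α x)
  eq_withDensity := gaussianReal_of_var_ne_zero m hv

lemma log_gaussianPDFReal (m : ℝ) (hv : v ≠ 0) (x : ℝ) :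
    log (gaussianPDFReal m v x) = -(log (2 * π * v) / 2) - (x - m) ^ 2 / (2 * v) := by
  rw [gaussianPDFReal, log_mul (by positivity) (by positivity), log_exp, log_inv,
    log_sqrt (by positivity)]
  ring

lemma exists_periodization_gaussianPDFReal_le (m : ℝ) (hv : v ≠ 0) (hα : α ≠ 0) :
    ∃ C > 0, ∀ x, periodization α (gaussianPDFReal m v) x ≤
      C * rexp ((x - m) ^ 2 / (2 * v)) := by
  have hsum : Summable fun k : ℤ => rexp (-(α ^ 2 / (4 * v) * (k : ℝ) ^ 2)) :=
    summable_exp_neg_mul_int_sq (by positivity)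
  refine ⟨(√(2 * π * v))⁻¹ * ∑' k : ℤ, rexp (-(α ^ 2 / (4 * v) * (k : ℝ) ^ 2)), ?_, fun x => ?_⟩
  · exact mul_pos (by positivity)
      (hsum.tsum_pos (fun _ => (exp_pos _).le) 0 (exp_pos _))
  · rw [mul_right_comm, ← tsum_mul_left]
    exact ((hasPeriodizableDensity_gaussianReal m hv hα).summable x).tsum_le_tsum
      (gaussianPDFReal_sub_int_mul_le m v α x) (hsum.mul_left _)

lemma exists_abs_log_periodization_gaussianPDFReal_le (m : ℝ) (hv : v ≠ 0) (hα : α ≠ 0) :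
    ∃ C, ∀ x, |log (periodization α (gaussianPDFReal m v) x)| ≤ C + (x - m) ^ 2 / (2 * v) := by
  have hg := hasPeriodizableDensity_gaussianReal m hv hα
  obtain ⟨C, hC, hle⟩ := exists_periodization_gaussianPDFReal_le m hv hα
  refine ⟨|log (2 * π * v) / 2| + |log C|, fun x => abs_le.2 ⟨?_, ?_⟩⟩
  · have lower := log_le_log (hg.pos x) (hg.le_periodization x)
    rw [log_gaussianPDFReal m hv] at lower
    linarith [le_abs_self (log (2 * π * v) / 2), abs_nonneg (log C)]
  · have upper := log_le_log (hg.periodization_pos x) (hle x)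
    rw [log_mul hC.ne' (exp_pos _).ne', log_exp] at upper
    linarith [le_abs_self (log C), abs_nonneg (log (2 * π * v) / 2)]

lemma integrable_log_gaussianPDFReal {P : Measure ℝ} [IsFiniteMeasure P] (hP : MemLp id 2 P)
    (m : ℝ) (hv : v ≠ 0) : Integrable (fun x => log (gaussianPDFReal m v x)) P := by
  simp only [log_gaussianPDFReal m hv]
  exact (integrable_const _).sub ((hP.sub (memLp_const m)).integrable_sq.div_const _)

lemma integrable_log_periodization_gaussianPDFReal {P : Measure ℝ} [IsFiniteMeasure P]
    (hP : MemLp id 2 P) (m : ℝ) (hv : v ≠ 0) (hα : α ≠ 0) :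
    Integrable (fun x => log (periodization α (gaussianPDFReal m v) x)) P := by
  obtain ⟨C, hC⟩ := exists_abs_log_periodization_gaussianPDFReal_le m hv hα
  have hmeas := (hasPeriodizableDensity_gaussianReal m hv hα).measurable_periodization.log
  have hsq : Integrable (fun x => (x - m) ^ 2) P := (hP.sub (memLp_const m)).integrable_sq
  exact ((integrable_const C).add (hsq.div_const (2 * v))).mono'
    hmeas.aestronglyMeasurable (ae_of_all _ hC)

lemma log_gaussianPDFReal_div_periodization (m : ℝ) (hv : v ≠ 0) (hα : α ≠ 0) (x : ℝ) :
    log (gaussianPDFReal m v x / periodization α (gaussianPDFReal m v) x) =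
      log (gaussianPDFReal m v x) - log (periodization α (gaussianPDFReal m v) x) :=
  have hg := hasPeriodizableDensity_gaussianReal m hv hα
  log_div (hg.pos x).ne' (hg.periodization_pos x).ne'

lemma integrable_log_gaussianPDFReal_div_periodization {P : Measure ℝ} [IsFiniteMeasure P]
    (hP : MemLp id 2 P) (m : ℝ) (hv : v ≠ 0) (hα : α ≠ 0) :
    Integrable (fun x => log (gaussianPDFReal m v x / periodization α (gaussianPDFReal m v) x))
      P := by
  simp only [log_gaussianPDFReal_div_periodization m hv hα]
  exact (integrable_log_gaussianPDFReal hP m hv).sub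
    (integrable_log_periodization_gaussianPDFReal hP m hv hα)

lemma integral_sub_mean_sq_gaussianReal (m : ℝ) (v : ℝ≥0) :
    ∫ x, (x - m) ^ 2 ∂gaussianReal m v = v := by
  simpa [variance_eq_integral aemeasurable_id'] using
    variance_fun_id_gaussianReal (μ := m) (v := v)

lemma integral_log_gaussianPDFReal (m : ℝ) (hv : v ≠ 0) :
    ∫ x, log (gaussianPDFReal m v x) ∂gaussianReal m v = -((log (2 * π * v) + 1) / 2) := by
  have hsq : Integrable (fun x => (x - m) ^ 2) (gaussianReal m v) :=
    ((memLp_id_gaussianReal 2).sub (memLp_const m)).integrable_sq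
  simp only [log_gaussianPDFReal m hv]
  rw [integral_sub (integrable_const _) (hsq.div_const _), integral_div,
    integral_sub_mean_sq_gaussianReal, integral_const]
  simp only [probReal_univ, one_smul]
  field_simp
  ring

lemma integral_log_gaussianPDFReal_div_periodization (m : ℝ) (hv : v ≠ 0) (hα : α ≠ 0) :
    ∫ x, log (gaussianPDFReal m v x / periodization α (gaussianPDFReal m v) x)
        ∂gaussianReal m v =
      -((log (2 * π * v) + 1) / 2) -
        ∫ x, log (periodization α (gaussianPDFReal m v) x) ∂gaussianReal m v := by
  simp only [log_gaussianPDFReal_div_periodization m hv hα]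
  rw [integral_sub (integrable_log_gaussianPDFReal (memLp_id_gaussianReal 2) m hv)
    (integrable_log_periodization_gaussianPDFReal (memLp_id_gaussianReal 2) m hv hα),
    integral_log_gaussianPDFReal m hv]

lemma gaussianReal_conv_gaussianReal_sub (m : ℝ) (hvw : v ≤ w) :
    gaussianReal m v ∗ gaussianReal 0 (w - v) = gaussianReal m w := by
  rw [gaussianReal_conv_gaussianReal, add_zero, add_tsub_cancel_of_le hvw]

lemma integral_log_periodization_gaussianPDFReal_anti (m : ℝ) (hv : v ≠ 0) (hvw : v ≤ w)
    (hα : α ≠ 0) :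
    ∫ x, log (periodization α (gaussianPDFReal m w) x) ∂gaussianReal m w ≤
      ∫ x, log (periodization α (gaussianPDFReal m v) x) ∂gaussianReal m v := by
  have hw : w ≠ 0 := (hv.pos.trans_le hvw).ne'
  have hgv := hasPeriodizableDensity_gaussianReal m hv hα
  have hgw := hasPeriodizableDensity_gaussianReal m hw hα
  have hv_int := integrable_log_periodization_gaussianPDFReal
    (memLp_id_gaussianReal (μ := m) (v := v) 2) m hv hα
  have hw_int := integrable_log_periodization_gaussianPDFReal
    (memLp_id_gaussianReal (μ := m) (v := w) 2) m hw hα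
  rw [← gaussianReal_conv_gaussianReal_sub m hvw] at hgw hw_int ⊢
  exact hgv.integral_log_periodization_conv_le hgw hv_int hw_int

lemma integral_log_gaussianPDFReal_div_periodization_anti (m : ℝ) (hv : v ≠ 0) (hvw : v ≤ w)
    (hα : α ≠ 0) :
    ∫ x, log (gaussianPDFReal m w x / periodization α (gaussianPDFReal m w) x)
        ∂gaussianReal m w ≤
      ∫ x, log (gaussianPDFReal m v x / periodization α (gaussianPDFReal m v) x)
        ∂gaussianReal m v := by
  have hw : w ≠ 0 := (hv.pos.trans_le hvw).ne'
  have hgv := hasPeriodizableDensity_gaussianReal m hv hα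
  have hgw := hasPeriodizableDensity_gaussianReal m hw hα
  have hv_int := integrable_log_gaussianPDFReal_div_periodization
    (memLp_id_gaussianReal (μ := m) (v := v) 2) m hv hα
  have hw_int := integrable_log_gaussianPDFReal_div_periodization
    (memLp_id_gaussianReal (μ := m) (v := w) 2) m hw hα
  rw [← gaussianReal_conv_gaussianReal_sub m hvw] at hgw hw_int ⊢
  exact hgv.integral_log_div_periodization_conv_le hgw hv_int hw_int

end Gaussian

section AliasedEntropy

variable {σ τ α : ℝ}

lemma gaussDen_eq_gaussianPDFReal (σ : ℝ) :
    gaussDen σ = gaussianPDFReal 0 (σ ^ 2).toNNReal := by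
  ext x
  simp only [gaussDen, gaussianPDFReal, coe_toNNReal _ (sq_nonneg σ), sub_zero]

lemma aliasedDen_eq_periodization (σ α : ℝ) :
    aliasedDen σ α = periodization α (gaussianPDFReal 0 (σ ^ 2).toNNReal) := by
  rw [← gaussDen_eq_gaussianPDFReal]
  rfl

lemma toNNReal_sq_ne_zero (hσ : σ ≠ 0) : (σ ^ 2).toNNReal ≠ 0 :=
  (toNNReal_pos.2 (by positivity)).ne'

lemma aliasedEnt_eq_neg_integral_log (hσ : σ ≠ 0) (hα : 0 < α) :
    aliasedEnt α σ = -∫ x, log (periodization α (gaussianPDFReal 0 (σ ^ 2).toNNReal) x)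
      ∂gaussianReal 0 (σ ^ 2).toNNReal := by
  have hv := toNNReal_sq_ne_zero hσ
  have unfolding := (hasPeriodizableDensity_gaussianReal 0 hv hα.ne').integral_of_periodic hα
    ((periodic_periodization α _).comp log)
    (integrable_log_periodization_gaussianPDFReal (memLp_id_gaussianReal 2) 0 hv hα.ne') 0
  simp only [Function.comp_apply, zero_add] at unfolding
  rw [unfolding, ← integral_Ico_eq_integral_Ioc, aliasedEnt, aliasedDen_eq_periodization]

lemma aliasedEnt_le_aliasedEnt (hα : 0 < α) (hσ : 0 < σ) (hστ : σ ≤ τ) :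
    aliasedEnt α σ ≤ aliasedEnt α τ := by
  rw [aliasedEnt_eq_neg_integral_log hσ.ne' hα,
    aliasedEnt_eq_neg_integral_log (hσ.trans_le hστ).ne' hα, neg_le_neg_iff]
  exact integral_log_periodization_gaussianPDFReal_anti 0 (toNNReal_sq_ne_zero hσ.ne')
    (toNNReal_le_toNNReal (by gcongr)) hα.ne'

lemma aliasedEnt_sub_le_half_log (hα : 0 < α) (hσ : 0 < σ) (hστ : σ ≤ τ) :
    aliasedEnt α τ - aliasedEnt α σ ≤ 1 / 2 * log (τ ^ 2 / σ ^ 2) := by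
  have hτ : 0 < τ := hσ.trans_le hστ
  have hσv := toNNReal_sq_ne_zero hσ.ne'
  have hτv := toNNReal_sq_ne_zero hτ.ne'
  have anti := integral_log_gaussianPDFReal_div_periodization_anti 0 hσv
    (toNNReal_le_toNNReal (by gcongr : σ ^ 2 ≤ τ ^ 2)) hα.ne'
  rw [integral_log_gaussianPDFReal_div_periodization 0 hσv hα.ne',
    integral_log_gaussianPDFReal_div_periodization 0 hτv hα.ne',
    coe_toNNReal _ (sq_nonneg σ), coe_toNNReal _ (sq_nonneg τ),
    log_mul two_pi_pos.ne' (by positivity), log_mul two_pi_pos.ne' (by positivity)] at anti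
  rw [aliasedEnt_eq_neg_integral_log hσ.ne' hα, aliasedEnt_eq_neg_integral_log hτ.ne' hα,
    log_div (by positivity) (by positivity)]
  linarith

lemma sum_range_partCap (α σ : ℝ) (n : ℕ) :
    ∑ i ∈ Finset.range n, partCap (2 ^ i * α) σ =
      aliasedEnt α σ - aliasedEnt (2 ^ n * α) σ + n * log 2 := by
  simp only [partCap, ← mul_assoc, ← pow_succ']
  rw [Finset.sum_add_distrib, Finset.sum_range_sub' fun i => aliasedEnt (2 ^ i * α) σ]
  simp

end AliasedEntropy

/-- upper bound on the total secrecy rate (converse part of the rate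
computation in Theorem 1): the sum over the levels of the binary partition chain
`αℤ/2αℤ/⋯/2^{r−1}αℤ` of the per-level capacity differences is at most
`(1/2)·log(σ_e²/σ_b²)`. -/
theorem total_secrecy_rate_upper_bound (σb σe α : ℝ) (hσb : 0 < σb) (hbe : σb ≤ σe)
    (hα : 0 < α) (r : ℕ) (hr : 2 ≤ r) :
    ∑ i ∈ Finset.range (r - 1),
        (partCap ((2 : ℝ) ^ i * α) σb - partCap ((2 : ℝ) ^ i * α) σe) ≤
      (1 / 2 : ℝ) * Real.log (σe ^ 2 / σb ^ 2) := by
  have fine_level : aliasedEnt α σb ≤ aliasedEnt α σe := aliasedEnt_le_aliasedEnt hα hσb hbe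
  have coarse_level : aliasedEnt (2 ^ (r - 1) * α) σe - aliasedEnt (2 ^ (r - 1) * α) σb ≤
      1 / 2 * log (σe ^ 2 / σb ^ 2) := aliasedEnt_sub_le_half_log (by positivity) hσb hbe
  rw [Finset.sum_sub_distrib, sum_range_partCap, sum_range_partCap]
  linarith
end
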